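/- Let n ≥ 3. If n ≡ 0 (mod 3), then the maximum of the permanent over Λ̂_n^3 equals 6^{n/3}. If n ≡ 1 (mod 3), then the maximum of the permanent over Λ̂_n^3 equals (3/2)·6^{(n−1)/3} = 9·6^{(n−4)/3}. If n ≡ 2 (mod 3) and n ≥ 8, then the maximum of the permanent over Λ̂_n^3 equals (9/4)·6^{(n−2)/3} = 81·6^{(n−8)/3}. -/

import Mathlib

open Matrix

/-- `Λ̂_n^3`: symmetric (0,1)-matrices with exactly three 1's in every row and
every column, and with 1's on the main diagonal. -/
def LambdaHat3 (n : ℕ) : Set (Matrix (Fin n) (Fin n) ℤ) :=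
  {A | (∀ i j, A i j = 0 ∨ A i j = 1) ∧ (∀ i, ∑ j, A i j = 3) ∧ (∀ j, ∑ i, A i j = 3) ∧
    A.IsSymm ∧ (∀ i, A i i = 1)}

namespace Matrix

section Bordered

variable {n R : Type*}

/-- The matrix `A` bordered by a first row `(α, u)` and a first column `(α, c)`. -/
def bordered (α : R) (u c : n → R) (A : Matrix n n R) : Matrix (Option n) (Option n) R
  | none, none => α
  | none, some j => u j
  | some i, none => c i
  | some i, some j => A i j

theorem updateRow_bordered_some [DecidableEq n] (α β : R) (u c w : n → R) (A : Matrix n n R)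
    (p : n) :
    (bordered α u c A).updateRow (some p) (fun o => o.elim β w) =
      bordered α u (Function.update c p β) (A.updateRow p w) := by
  ext i j
  rcases i with _ | i <;> rcases j with _ | j <;>
    simp [bordered, updateRow_apply, Function.update_apply]

theorem updateRow_bordered_none [DecidableEq n] (α β : R) (u c w : n → R) (A : Matrix n n R) :
    (bordered α u c A).updateRow none (fun o => o.elim β w) =
      bordered β w c A := by
  ext i j
  rcases i with _ | i <;> rcases j with _ | j <;>
    simp [bordered, updateRow_apply]

theorem updateRow_nonneg [DecidableEq n] {A : Matrix n n ℤ} (hA : ∀ i j, 0 ≤ A i j) (p : n)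
    {u : n → ℤ} (hu : 0 ≤ u) (i j : n) : 0 ≤ A.updateRow p u i j := by
  rw [updateRow_apply]
  split_ifs
  · exact hu j
  · exact hA i j

end Bordered

section Permanent

variable {m n R : Type*} [DecidableEq m] [Fintype m] [DecidableEq n] [Fintype n] [CommSemiring R]

theorem permanent_submatrix_equiv_self (e : n ≃ m) (A : Matrix m m R) :
    (A.submatrix e e).permanent = A.permanent := by
  unfold permanent
  refine Fintype.sum_equiv (Equiv.permCongr e) _ _ fun σ => ?_
  refine Fintype.prod_equiv e _ _ fun i => ?_
  simp [Equiv.permCongr_apply]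

theorem permanent_fromBlocks_zero₂₁ (A : Matrix m m R) (B : Matrix m n R) (D : Matrix n n R) :
    (fromBlocks A B 0 D).permanent = A.permanent * D.permanent := by
  classical
  simp_rw [permanent]
  convert!
    Eq.symm <|
      Finset.sum_subset (M := R)
        (Finset.subset_univ
          ((Equiv.Perm.sumCongrHom m n).range : Set (Equiv.Perm (m ⊕ n))).toFinset)
        ?_
  · simp_rw [Finset.sum_mul_sum, ← Finset.sum_product', Finset.univ_product_univ]
    refine Finset.sum_nbij (fun σ => σ.fst.sumCongr σ.snd) ?_ ?_ ?_ ?_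
    · intro σ₁₂ _
      rw [Set.mem_toFinset]
      exact ⟨σ₁₂, rfl⟩
    · intro σ₁ _ σ₂ _ h
      have h2 : ∀ x, Equiv.Perm.sumCongr σ₁.fst σ₁.snd x = Equiv.Perm.sumCongr σ₂.fst σ₂.snd x :=
        DFunLike.congr_fun h
      simp only [Sum.map_inr, Sum.map_inl, Equiv.Perm.sumCongr_apply, Sum.forall, Sum.inl.injEq,
        Sum.inr.injEq] at h2
      ext x
      · exact h2.left x
      · exact h2.right x
    · intro σ hσ
      rw [Finset.mem_coe, Set.mem_toFinset] at hσ
      obtain ⟨σ₁₂, hσ₁₂⟩ := hσ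
      use σ₁₂
      rw [← hσ₁₂]
      simp
    · rintro ⟨σ₁, σ₂⟩ -
      simp [Fintype.prod_sum_type]
  · rintro σ - hσn
    have h1 : ¬∀ x, ∃ y, Sum.inl y = σ (Sum.inl x) := by
      rw [Set.mem_toFinset] at hσn
      simpa only [Set.MapsTo, Set.mem_range, forall_exists_index, forall_apply_eq_imp_iff] using
        mt Equiv.Perm.mem_sumCongrHom_range_of_perm_mapsTo_inl hσn
    obtain ⟨a, ha⟩ := not_forall.mp h1
    rcases hx : σ (Sum.inl a) with a2 | b
    · exact absurd hx.symm ((not_exists.mp ha) a2)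
    · rw [Finset.prod_eq_zero (Finset.mem_univ (Sum.inl a))]
      rw [hx, fromBlocks_apply₂₁, zero_apply]

theorem permanent_updateCol_add (M : Matrix n n R) (j : n) (u v : n → R) :
    permanent (updateCol M j (u + v)) =
      permanent (updateCol M j u) + permanent (updateCol M j v) := by
  simp only [permanent, ← Finset.mul_prod_erase _ _ (Finset.mem_univ j), updateCol_self,
    Pi.add_apply, add_mul, Finset.sum_add_distrib]
  congr 1 <;>
  · refine Finset.sum_congr rfl fun σ _ => ?_
    congr 1
    refine Finset.prod_congr rfl fun i hi => ?_
    simp only [updateCol_ne (Finset.ne_of_mem_erase hi)]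

theorem permanent_updateRow_add (M : Matrix n n R) (j : n) (u v : n → R) :
    permanent (updateRow M j (u + v)) =
      permanent (updateRow M j u) + permanent (updateRow M j v) := by
  simp only [← permanent_transpose (updateRow _ _ _), ← updateCol_transpose,
    permanent_updateCol_add]

theorem permanent_updateRow_zero (M : Matrix n n R) (j : n) :
    permanent (updateRow M j 0) = 0 := by
  have := permanent_updateRow_smul M j 0 0
  simpa using this

theorem permanent_bordered (α : R) (u c : n → R) (A : Matrix n n R) :
    (bordered α u c A).permanent =
      α * A.permanent + ∑ i, c i * (A.updateRow i u).permanent := by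
  rw [permanent, ← Equiv.sum_comp Equiv.Perm.decomposeOption.symm, Fintype.sum_prod_type,
    Fintype.sum_option]
  simp only [permanent, Finset.mul_sum]
  congr 1
  · refine Finset.sum_congr rfl fun σ _ => ?_
    simp [Fintype.prod_option, bordered]
  · refine Finset.sum_congr rfl fun a _ => Finset.sum_congr rfl fun σ _ => ?_
    simp only [Fintype.prod_option, Equiv.Perm.decomposeOption_symm_apply, Equiv.Perm.mul_apply,
      Equiv.optionCongr_apply, Option.map_none, Option.map_some, Equiv.swap_apply_left]
    congr 1
    refine Finset.prod_congr rfl fun b _ => ?_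
    by_cases h : σ b = a
    · simp [h, bordered]
    · rw [Equiv.swap_apply_of_ne_of_ne (by simp) (by simpa using h), updateRow_ne h]
      rfl

/-- The permanent of a matrix with two extra rows `(α, β, u)` and `(γ, δ, v)`, whose two extra
columns are standard basis vectors below these rows. -/
theorem permanent_bordered_bordered {p q : n} (hpq : p ≠ q) (α β γ δ : R) (u v : n → R)
    (A : Matrix n n R) :
    (bordered α (fun o => o.elim β u) (fun o => o.elim γ (Pi.single p 1))
        (bordered δ v (Pi.single q 1 : n → R) A)).permanent =
      (α * δ + β * γ) * A.permanent + α * (A.updateRow q v).permanent +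
        γ * (A.updateRow q u).permanent + δ * (A.updateRow p u).permanent +
        β * (A.updateRow p v).permanent + ((A.updateRow p u).updateRow q v).permanent := by
  rw [permanent_bordered, Fintype.sum_option]
  simp only [Option.elim_none, Option.elim_some]
  rw [updateRow_bordered_none]
  have h1 : ∀ (z : n → R) (r : n), ∑ i, (Pi.single r 1 : n → R) i * z i = z r := by
    intro z r
    rw [Finset.sum_eq_single r] <;> simp +contextual
  rw [h1, updateRow_bordered_some]
  simp only [permanent_bordered, h1]
  have h2 : ∑ i, Function.update (Pi.single q 1 : n → R) p β i *
        ((A.updateRow p u).updateRow i v).permanent =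
      β * (A.updateRow p v).permanent + ((A.updateRow p u).updateRow q v).permanent := by
    rw [← Finset.sum_subset (Finset.subset_univ {p, q}), Finset.sum_pair hpq]
    · simp [Function.update_of_ne hpq.symm]
    · intro i _ hi
      simp only [Finset.mem_insert, Finset.mem_singleton, not_or] at hi
      simp [Function.update_of_ne hi.1, hi.2]
  rw [h2]
  ring

theorem permanent_updateRow_updateRow_comm {p q : n} (hpq : p ≠ q) (A : Matrix n n R)
    (u v : n → R) :
    ((A.updateRow p u).updateRow q v).permanent =
      ((A.updateRow p v).updateRow q u).permanent := by
  rw [← permanent_permute_cols (Equiv.swap p q)]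
  congr 1
  ext i j
  by_cases hp : i = p
  · subst hp; simp [updateRow_apply, hpq]
  by_cases hq : i = q
  · subst hq; simp [updateRow_apply, hpq]
  simp [updateRow_apply, hp, hq, Equiv.swap_apply_of_ne_of_ne hp hq]

end Permanent

section Order

variable {n : Type*} [DecidableEq n] [Fintype n]

theorem permanent_nonneg {A : Matrix n n ℤ} (hA : ∀ i j, 0 ≤ A i j) : 0 ≤ A.permanent :=
  Finset.sum_nonneg fun _ _ => Finset.prod_nonneg fun _ _ => hA _ _

theorem permanent_mono {A B : Matrix n n ℤ} (hA : ∀ i j, 0 ≤ A i j) (h : ∀ i j, A i j ≤ B i j) :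
    A.permanent ≤ B.permanent :=
  Finset.sum_le_sum fun _ _ => Finset.prod_le_prod (fun _ _ => hA _ _) fun _ _ => h _ _

theorem permanent_updateRow_single_le {A : Matrix n n ℤ} (hA : ∀ i j, 0 ≤ A i j) {p : n}
    (hp : 1 ≤ A p p) : (A.updateRow p (Pi.single p 1)).permanent ≤ A.permanent := by
  refine permanent_mono (updateRow_nonneg hA p (Pi.single_nonneg.2 zero_le_one)) fun i j => ?_
  by_cases hi : i = p
  · subst hi
    by_cases hj : j = i
    · subst hj; simpa using hp
    · simpa [hj] using hA i j
  · simp [updateRow_ne hi]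

/-- If the column `p` vanishes outside the row `y`, then this row may be replaced by a standard
basis vector. -/
theorem permanent_le_updateRow_of_col {A : Matrix n n ℤ} (hA : ∀ i j, 0 ≤ A i j) {p y : n}
    (hy : A y p ≤ 1) (h : ∀ i, i ≠ y → A i p = 0) :
    A.permanent ≤ (A.updateRow y (Pi.single p 1)).permanent := by
  refine Finset.sum_le_sum fun σ _ => ?_
  by_cases hσ : σ p = y
  · refine Finset.prod_le_prod (fun _ _ => hA _ _) fun i _ => ?_
    by_cases hi : i = p
    · subst hi; simpa [hσ] using hy
    · have : σ i ≠ y := fun h' => hi (σ.injective (h'.trans hσ.symm))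
      simp [updateRow_ne this]
  · rw [Finset.prod_eq_zero (f := fun i => A (σ i) i) (Finset.mem_univ p) (h _ hσ)]
    exact Finset.prod_nonneg fun _ _ =>
      updateRow_nonneg hA y (Pi.single_nonneg.2 zero_le_one) _ _

/-- Exchanging the two diagonal positions `p, y` for the two off-diagonal ones. -/
theorem permanent_updateRow_single_swap_le {A : Matrix n n ℤ} (hA : ∀ i j, 0 ≤ A i j) {p y : n}
    (hpy : p ≠ y) (hyy : 1 ≤ A y y) (hyp : A y p ≤ 1) (h : ∀ i, i ≠ p → i ≠ y → A i p = 0) :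
    (A.updateRow p (Pi.single y 1)).permanent ≤ (A.updateRow p (Pi.single p 1)).permanent := by
  have hs : ∀ z : n, (0 : n → ℤ) ≤ Pi.single z 1 := fun z => Pi.single_nonneg.2 zero_le_one
  refine (permanent_le_updateRow_of_col (y := y) (p := p) (updateRow_nonneg hA p (hs y))
    ?_ ?_).trans ?_
  · rwa [updateRow_ne hpy.symm]
  · intro i hi
    by_cases hip : i = p
    · subst hip; simp [hpy]
    · rw [updateRow_ne hip, h i hip hi]
  · rw [permanent_updateRow_updateRow_comm hpy]
    exact permanent_updateRow_single_le (updateRow_nonneg hA p (hs p))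
      (by rwa [updateRow_ne hpy.symm])

end Order

end Matrix

/-- The condition defining `LambdaHat3`, over an arbitrary finite index type. -/
structure IsHat3 {V : Type*} [Fintype V] (A : Matrix V V ℤ) : Prop where
  zero_or_one : ∀ i j, A i j = 0 ∨ A i j = 1
  row_sum : ∀ i, ∑ j, A i j = 3
  symm : ∀ i j, A i j = A j i
  diag : ∀ i, A i i = 1

namespace IsHat3

variable {V W : Type*} [Fintype V] [Fintype W] {A : Matrix V V ℤ}

theorem mem_lambdaHat3_iff {n : ℕ} {A : Matrix (Fin n) (Fin n) ℤ} :
    A ∈ LambdaHat3 n ↔ IsHat3 A := by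
  constructor
  · rintro ⟨h1, h2, -, h4, h5⟩
    exact ⟨h1, h2, fun i j => h4.apply j i, h5⟩
  · rintro ⟨h1, h2, h3, h4⟩
    refine ⟨h1, h2, fun j => ?_, IsSymm.ext fun i j => h3 j i, h4⟩
    rw [← h2 j]
    exact Finset.sum_congr rfl fun i _ => h3 i j

theorem nonneg (hA : IsHat3 A) (i j : V) : 0 ≤ A i j := by
  rcases hA.zero_or_one i j with h | h <;> simp [h]

theorem submatrix_equiv (hA : IsHat3 A) (e : W ≃ V) : IsHat3 (A.submatrix e e) where
  zero_or_one _ _ := hA.zero_or_one _ _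
  row_sum i := (Equiv.sum_comp e fun j => A (e i) j).trans (hA.row_sum _)
  symm _ _ := hA.symm _ _
  diag _ := hA.diag _

section Neighbors

variable [DecidableEq V]

theorem eq_zero_of_ne (hA : IsHat3 A) {x u w v : V} (hu : A x u = 1) (hw : A x w = 1)
    (hux : u ≠ x) (hwx : w ≠ x) (huw : u ≠ w) (hvx : v ≠ x) (hvu : v ≠ u) (hvw : v ≠ w) :
    A x v = 0 := by
  have h : ∑ j ∈ ({x, u, w, v} : Finset V), A x j ≤ 3 := by
    rw [← hA.row_sum x]
    exact Finset.sum_le_sum_of_subset_of_nonneg (Finset.subset_univ _) fun j _ _ => hA.nonneg x j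
  rw [Finset.sum_insert (by simp [hux.symm, hwx.symm, hvx.symm]),
    Finset.sum_insert (by simp [huw, hvu.symm]), Finset.sum_pair hvw.symm, hA.diag, hu, hw] at h
  have := hA.nonneg x v
  linarith

theorem exists_eq_one (hA : IsHat3 A) {x u : V} (hux : u ≠ x) :
    ∃ w, w ≠ x ∧ w ≠ u ∧ A x w = 1 := by
  by_contra! h
  have h' : ∑ j ∈ ({x, u} : Finset V), A x j = 3 := by
    rw [← hA.row_sum x]
    refine Finset.sum_subset (Finset.subset_univ _) fun j _ hj => ?_
    simp only [Finset.mem_insert, Finset.mem_singleton, not_or] at hj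
    exact (hA.zero_or_one x j).resolve_right (h j hj.1 hj.2)
  rw [Finset.sum_pair hux.symm, hA.diag] at h'
  rcases hA.zero_or_one x u with h0 | h0 <;> rw [h0] at h' <;> norm_num at h'

theorem exists_neighbor (hA : IsHat3 A) (x : V) : ∃ u, u ≠ x ∧ A x u = 1 := by
  by_contra! h
  have h' := hA.row_sum x
  rw [Finset.sum_eq_single x (fun j _ hj => (hA.zero_or_one x j).resolve_right (h j hj))
    (by simp), hA.diag] at h'
  norm_num at h'

end Neighbors

theorem fromBlocks {B : Matrix W W ℤ} (hA : IsHat3 A) (hB : IsHat3 B) :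
    IsHat3 (fromBlocks A 0 0 B) where
  zero_or_one := by rintro (_ | _) (_ | _) <;> simp [hA.zero_or_one, hB.zero_or_one]
  row_sum := by rintro (_ | _) <;> simp [hA.row_sum, hB.row_sum]
  symm := by
    rintro (i | i) (j | j)
    · exact hA.symm i j
    · rfl
    · rfl
    · exact hB.symm i j
  diag := by rintro (_ | _) <;> simp [hA.diag, hB.diag]

/-- A set of indices carrying a matrix `T` of the same kind can be split off. -/
theorem exists_permanent_eq_mul [DecidableEq V] [DecidableEq W] {T : Matrix W W ℤ}
    (hA : IsHat3 A) (hT : IsHat3 T) (f : W → V) (hf : Function.Injective f)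
    (h : ∀ i j, A (f i) (f j) = T i j) :
    ∃ (U : Finset V) (B : Matrix U U ℤ), IsHat3 B ∧
      Fintype.card V = Fintype.card W + Fintype.card U ∧
      A.permanent = T.permanent * B.permanent := by
  let U : Finset V := (Finset.univ.image f)ᶜ
  have hU : ∀ v, v ∈ U ↔ ∀ i, f i ≠ v := by simp [U]
  let e : W ⊕ U ≃ V := Equiv.ofBijective (Sum.elim f (fun v => v)) <| by
    constructor
    · refine hf.sumElim Subtype.val_injective fun i v => ?_
      exact (hU _).1 v.2 i
    · intro v
      by_cases hv : v ∈ U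
      · exact ⟨Sum.inr ⟨v, hv⟩, rfl⟩
      · rw [hU] at hv
        push Not at hv
        obtain ⟨i, hi⟩ := hv
        exact ⟨Sum.inl i, hi⟩
  have hM := hA.submatrix_equiv e
  have h0 : ∀ i (v : U), A (f i) v = 0 := by
    intro i
    have := hM.row_sum (Sum.inl i)
    rw [Fintype.sum_sum_type] at this
    change ∑ j, A (f i) (f j) + ∑ v : U, A (f i) v = 3 at this
    simp only [h, hT.row_sum] at this
    have h3 : ∑ v : U, A (f i) v = 0 := by linarith
    intro v
    exact (Finset.sum_eq_zero_iff_of_nonneg fun v _ => hA.nonneg _ _).1 h3 v (Finset.mem_univ v)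
  have hMe : A.submatrix e e =
      Matrix.fromBlocks T 0 0 (A.submatrix (fun v : U => (v : V)) (fun v : U => (v : V))) := by
    ext (i | i) (j | j)
    · exact h i j
    · exact h0 i j
    · exact (hA.symm _ _).trans (h0 j i)
    · rfl
  refine ⟨U, A.submatrix (fun v => v) (fun v => v), ⟨fun _ _ => hA.zero_or_one _ _, fun v => ?_,
    fun _ _ => hA.symm _ _, fun _ => hA.diag _⟩, ?_, ?_⟩
  · have := hM.row_sum (Sum.inr v)
    rw [hMe, Fintype.sum_sum_type] at this
    simpa using this
  · rw [← Fintype.card_congr e, Fintype.card_sum]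
  · rw [← permanent_submatrix_equiv_self e, hMe, permanent_fromBlocks_zero₂₁]

/-- Contracting three consecutive vertices `some none, none, some (some none)` of a path. -/
theorem exists_permanent_le_of_option [DecidableEq W]
    {M : Matrix (Option (Option (Option W))) (Option (Option (Option W))) ℤ}
    (hM : IsHat3 M) {p q : W} (hpq : p ≠ q) (h21 : M none (some none) = 1)
    (h23 : M none (some (some none)) = 1) (h1 : M (some none) (some (some (some p))) = 1)
    (h3 : M (some (some none)) (some (some (some q))) = 1)
    (h0 : M (some (some (some p))) (some (some (some q))) = 0) :
    ∃ B : Matrix W W ℤ, IsHat3 B ∧ M.permanent ≤ 6 * B.permanent := by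
  have z2 : ∀ w, M none (some (some (some w))) = 0 := fun w =>
    hM.eq_zero_of_ne h21 h23 (by simp) (by simp) (by simp) (by simp) (by simp) (by simp)
  have z13 : M (some none) (some (some none)) = 0 :=
    hM.eq_zero_of_ne ((hM.symm _ _).trans h21) h1 (by simp) (by simp) (by simp) (by simp) (by simp)
      (by simp)
  have z1 : ∀ w, M (some none) (some (some (some w))) = (Pi.single p 1 : W → ℤ) w := by
    intro w
    by_cases hw : w = p
    · subst hw; simp [h1]
    · rw [Pi.single_eq_of_ne hw]
      exact hM.eq_zero_of_ne ((hM.symm _ _).trans h21) h1 (by simp) (by simp) (by simp) (by simp)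
        (by simp) (by simp [hw])
  have z3 : ∀ w, M (some (some none)) (some (some (some w))) = (Pi.single q 1 : W → ℤ) w := by
    intro w
    by_cases hw : w = q
    · subst hw; simp [h3]
    · rw [Pi.single_eq_of_ne hw]
      exact hM.eq_zero_of_ne ((hM.symm _ _).trans h23) h3 (by simp) (by simp) (by simp) (by simp)
        (by simp) (by simp [hw])
  let R : Matrix W W ℤ := fun i j => M (some (some (some i))) (some (some (some j)))
  have hR0 : ∀ i j, 0 ≤ R i j := fun i j => hM.nonneg _ _
  have hRs : ∀ i, ∑ j, R i j = 3 - (Pi.single p 1 : W → ℤ) i - (Pi.single q 1 : W → ℤ) i := by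
    intro i
    have := hM.row_sum (some (some (some i)))
    rw [Fintype.sum_option, Fintype.sum_option, Fintype.sum_option, hM.symm _ none,
      hM.symm _ (some none), hM.symm _ (some (some none)), z1, z2, z3] at this
    change 0 + (_ + (_ + ∑ j, R i j)) = 3 at this
    linarith
  have hRpq : R p q = 0 := h0
  have hRqp : R q p = 0 := (hM.symm _ _).trans h0
  -- the permanent of `M` in terms of `R`
  have hMR : M.permanent = 3 * R.permanent + 2 * (R.updateRow p (Pi.single p 1)).permanent +
      2 * (R.updateRow q (Pi.single q 1)).permanent +
      ((R.updateRow p (Pi.single p 1)).updateRow q (Pi.single q 1)).permanent +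
      (R.updateRow p (Pi.single q 1)).permanent + (R.updateRow q (Pi.single p 1)).permanent := by
    have hMb : M = bordered 1 (fun o => o.elim 1 fun o => o.elim 1 0)
        (fun o => o.elim 1 fun o => o.elim 1 0)
        (bordered 1 (fun o => o.elim 0 (Pi.single p 1)) (fun o => o.elim 0 (Pi.single p 1))
          (bordered 1 (Pi.single q 1) (Pi.single q 1) R)) := by
      ext i j
      rcases i with _ | _ | _ | i <;> rcases j with _ | _ | _ | j <;>
        simp only [bordered, hM.diag, h21, h23, z1, z2, z3, z13, hM.symm _ none,
          hM.symm _ (some none), hM.symm _ (some (some none)), R, Option.elim, Pi.zero_apply]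
    have hu : Function.update (fun o : Option W => o.elim 0 (Pi.single p 1 : W → ℤ)) none 1 =
        fun o => o.elim 1 (Pi.single p 1) := by
      ext (_ | i) <;> simp
    rw [hMb, permanent_bordered, Fintype.sum_option, Fintype.sum_option]
    simp only [Option.elim_none, Option.elim_some, Pi.zero_apply, zero_mul, Finset.sum_const_zero]
    rw [updateRow_bordered_none, updateRow_bordered_some, updateRow_bordered_none, hu]
    simp only [permanent_bordered_bordered hpq, permanent_updateRow_zero]
    rw [permanent_updateRow_updateRow_comm hpq _ 0, permanent_updateRow_zero]
    ring
  -- the contracted matrix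
  let B := (R.updateRow p (R p + Pi.single q 1)).updateRow q (R q + Pi.single p 1)
  have hBp : B p = R p + Pi.single q 1 := by
    ext j
    simp [B, updateRow_ne hpq]
  have hBq : B q = R q + Pi.single p 1 := by
    ext j
    simp [B]
  have hBi : ∀ i, i ≠ p → i ≠ q → B i = R i := by
    intro i hp hq
    ext j
    simp [B, updateRow_ne hp, updateRow_ne hq]
  have hBR : B.permanent = R.permanent + (R.updateRow p (Pi.single q 1)).permanent +
      (R.updateRow q (Pi.single p 1)).permanent +
      ((R.updateRow p (Pi.single p 1)).updateRow q (Pi.single q 1)).permanent := by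
    rw [permanent_updateRow_add, updateRow_comm R hpq _ (Pi.single p 1), permanent_updateRow_add]
    have h1 : (R.updateRow p (R p + Pi.single q 1)).updateRow q (R q) =
        R.updateRow p (R p + Pi.single q 1) := by
      conv_lhs => rw [← updateRow_ne (M := R) (b := R p + Pi.single q 1) hpq.symm, updateRow_eq_self]
    have h2 : (R.updateRow q (Pi.single p 1)).updateRow p (R p) = R.updateRow q (Pi.single p 1) := by
      conv_lhs => rw [← updateRow_ne (M := R) (b := Pi.single p 1) hpq, updateRow_eq_self]
    rw [h1, h2, permanent_updateRow_add, updateRow_eq_self, ← updateRow_comm R hpq,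
      permanent_updateRow_updateRow_comm hpq _ (Pi.single q 1)]
    ring
  have hB : ∀ i j, B i j = R i j + if i = p ∧ j = q ∨ i = q ∧ j = p then 1 else 0 := by
    intro i j
    by_cases hp : i = p
    · subst hp; simp [hBp, hpq, Pi.single_apply]
    by_cases hq : i = q
    · subst hq; simp [hBq, hpq.symm, Pi.single_apply]
    simp [hBi i hp hq, hp, hq]
  refine ⟨B, ⟨fun i j => ?_, fun i => ?_, fun i j => ?_, fun i => ?_⟩, ?_⟩
  · rw [hB]
    split_ifs with h
    · right
      rcases h with ⟨rfl, rfl⟩ | ⟨rfl, rfl⟩ <;> simp [hRpq, hRqp]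
    · simpa using hM.zero_or_one _ _
  · by_cases hp : i = p
    · subst hp; simp [hBp, Finset.sum_add_distrib, hRs, hpq]
    by_cases hq : i = q
    · subst hq; simp [hBq, Finset.sum_add_distrib, hRs, hp]
    simp [hBi i hp hq, hRs, hp, hq]
  · have : (i = p ∧ j = q ∨ i = q ∧ j = p) ↔ (j = p ∧ i = q ∨ j = q ∧ i = p) := by tauto
    rw [hB, hB, show R i j = R j i from hM.symm _ _, if_congr this rfl rfl]
  · have : ¬(i = p ∧ i = q ∨ i = q ∧ i = p) := by
      rintro (⟨rfl, h⟩ | ⟨rfl, h⟩)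
      exacts [hpq h, hpq h.symm]
    rw [hB, if_neg this, show R i i = 1 from hM.diag _, add_zero]
  · obtain ⟨y, hyp, hy⟩ : ∃ y, y ≠ p ∧ R p y = 1 := by
      obtain ⟨w, hw1, hw2, hw⟩ :=
        hM.exists_eq_one (x := some (some (some p))) (u := some none) (by simp)
      rcases w with _ | _ | _ | y
      · rw [hM.symm, z2] at hw
        norm_num at hw
      · exact absurd rfl hw2
      · rw [hM.symm, z3, Pi.single_eq_of_ne hpq] at hw
        norm_num at hw
      · exact ⟨y, by simpa using hw1, hw⟩
    have hyq : y ≠ q := by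
      rintro rfl
      rw [hRpq] at hy
      norm_num at hy
    have hRpi : ∀ i, i ≠ p → i ≠ y → R p i = 0 := fun i hip hiy =>
      hM.eq_zero_of_ne ((hM.symm _ _).trans h1) hy (by simp) (by simpa using hyp) (by simp)
        (by simpa using hip) (by simp) (by simpa using hiy)
    have hRp : R p = Pi.single p 1 + Pi.single y 1 := by
      ext i
      by_cases hip : i = p
      · subst hip; simpa [hyp.symm] using hM.diag _
      by_cases hiy : i = y
      · subst hiy; simpa [hyp] using hy
      simp [hRpi i hip hiy, hip, hiy]
    have hs : ∀ z : W, (0 : W → ℤ) ≤ Pi.single z 1 := fun z => Pi.single_nonneg.2 zero_le_one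
    have hR1 : ∀ i, 1 ≤ R i i := fun i => (hM.diag _).ge
    have hN0 := updateRow_nonneg hR0 q (hs q)
    have hb := permanent_updateRow_single_le hR0 (hR1 p)
    have hc : (R.updateRow q (Pi.single q 1)).permanent ≤
        2 * ((R.updateRow p (Pi.single p 1)).updateRow q (Pi.single q 1)).permanent := by
      have h2 : R.updateRow q (Pi.single q 1) =
          (R.updateRow q (Pi.single q 1)).updateRow p (Pi.single p 1 + Pi.single y 1) := by
        rw [← hRp]
        conv_rhs => rw [← updateRow_ne (M := R) (b := Pi.single q 1) hpq, updateRow_eq_self]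
      rw [h2, permanent_updateRow_add, updateRow_comm R hpq, two_mul]
      refine add_le_add_right (permanent_updateRow_single_swap_le hN0 hyp.symm ?_ ?_ ?_) _
      · rw [updateRow_ne hyq]
        exact hR1 y
      · rw [updateRow_ne hyq, show R y p = R p y from hM.symm _ _, hy]
      · intro i hip hiy
        by_cases hiq : i = q
        · subst hiq; simp [hpq]
        · rw [updateRow_ne hiq, show R i p = R p i from hM.symm _ _, hRpi i hip hiy]
    have ha := permanent_nonneg hR0
    have hd := permanent_nonneg (updateRow_nonneg (updateRow_nonneg hR0 p (hs p)) q (hs q))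
    have he := permanent_nonneg (updateRow_nonneg hR0 p (hs q))
    have hf := permanent_nonneg (updateRow_nonneg hR0 q (hs p))
    rw [hMR, hBR]
    linarith

/-- Contracting three consecutive vertices `x₁, x₂, x₃` of a path `x₀, x₁, x₂, x₃, x₄`. -/
theorem exists_permanent_le_of_path [DecidableEq V] (hA : IsHat3 A) {x₀ x₁ x₂ x₃ x₄ : V}
    (h21 : A x₂ x₁ = 1) (h23 : A x₂ x₃ = 1) (h10 : A x₁ x₀ = 1) (h34 : A x₃ x₄ = 1)
    (h04 : A x₀ x₄ = 0) (n12 : x₁ ≠ x₂) (n13 : x₁ ≠ x₃) (n23 : x₂ ≠ x₃) (n01 : x₀ ≠ x₁)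
    (n02 : x₀ ≠ x₂) (n03 : x₀ ≠ x₃) (n41 : x₄ ≠ x₁) (n42 : x₄ ≠ x₂) (n43 : x₄ ≠ x₃)
    (n04 : x₀ ≠ x₄) :
    ∃ (U : Finset V) (B : Matrix U U ℤ), IsHat3 B ∧ Fintype.card V = Fintype.card U + 3 ∧
      A.permanent ≤ 6 * B.permanent := by
  let U : Finset V := {x₁, x₂, x₃}ᶜ
  have hU : ∀ v, v ∈ U ↔ v ≠ x₁ ∧ v ≠ x₂ ∧ v ≠ x₃ := by simp [U]
  let f : Option (Option (Option U)) → V := fun o =>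
    o.elim x₂ fun o => o.elim x₁ fun o => o.elim x₃ fun v => v
  let e : Option (Option (Option U)) ≃ V := Equiv.ofBijective f <| by
    constructor
    · have h := fun v : U => (hU v).1 v.2
      rintro (_ | _ | _ | v) (_ | _ | _ | w) hvw <;>
        simp only [f, Option.elim_none, Option.elim_some] at hvw <;> grind
    · intro v
      by_cases hv : v ∈ U
      · exact ⟨some (some (some ⟨v, hv⟩)), rfl⟩
      · simp only [U, Finset.mem_compl, Finset.mem_insert, Finset.mem_singleton, not_not] at hv
        rcases hv with rfl | rfl | rfl
        exacts [⟨some none, rfl⟩, ⟨none, rfl⟩, ⟨some (some none), rfl⟩]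
  obtain ⟨B, hB, hle⟩ := (hA.submatrix_equiv e).exists_permanent_le_of_option
    (p := ⟨x₀, (hU _).2 ⟨n01, n02, n03⟩⟩) (q := ⟨x₄, (hU _).2 ⟨n41, n42, n43⟩⟩)
    (by simpa using n04) h21 h23 h10 h34 h04
  refine ⟨U, B, hB, ?_, ?_⟩
  · rw [← Fintype.card_congr e, Fintype.card_option, Fintype.card_option, Fintype.card_option]
  · rwa [permanent_submatrix_equiv_self] at hle

/-- The matrix of the cycle of length 3. -/
def triangle : Matrix (Fin 3) (Fin 3) ℤ :=
  !![1, 1, 1; 1, 1, 1; 1, 1, 1]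

/-- The matrix of the cycle of length 4. -/
def square : Matrix (Fin 4) (Fin 4) ℤ :=
  !![1, 1, 0, 1; 1, 1, 1, 0; 0, 1, 1, 1; 1, 0, 1, 1]

/-- The matrix of the cycle of length 5. -/
def pentagon : Matrix (Fin 5) (Fin 5) ℤ :=
  !![1, 1, 0, 0, 1; 1, 1, 1, 0, 0; 0, 1, 1, 1, 0; 0, 0, 1, 1, 1; 1, 0, 0, 1, 1]

theorem isHat3_triangle : IsHat3 triangle :=
  ⟨fun i => by fin_cases i <;> decide, by decide, fun i => by fin_cases i <;> decide, by decide⟩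

theorem isHat3_square : IsHat3 square :=
  ⟨fun i => by fin_cases i <;> decide, by decide, fun i => by fin_cases i <;> decide, by decide⟩

theorem isHat3_pentagon : IsHat3 pentagon :=
  ⟨fun i => by fin_cases i <;> decide, by decide, fun i => by fin_cases i <;> decide, by decide⟩

theorem permanent_triangle : triangle.permanent = 6 := by
  decide +kernel

theorem permanent_square : square.permanent = 9 := by
  decide +kernel

theorem permanent_pentagon : pentagon.permanent = 13 := by
  decide +kernel

/-- Four times the maximal permanent, up to the exceptional case `n = 5`. -/
def bound (n : ℕ) : ℤ :=
  ![4, 6, 9] (Fin.ofNat 3 n) * 6 ^ (n / 3)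

theorem bound_add_three (n : ℕ) : bound (n + 3) = 6 * bound n := by
  simp only [bound, Fin.ofNat, Nat.add_mod_right, Nat.add_div_right n three_pos, pow_succ]
  ring

theorem le_bound_add_four : ∀ n, 9 * bound n ≤ bound (n + 4)
  | 0 | 1 | 2 => by decide
  | n + 3 => by
    rw [bound_add_three, show n + 3 + 4 = n + 4 + 3 from rfl, bound_add_three]
    linarith [le_bound_add_four n]

theorem le_bound_add_five : ∀ n, 13 * bound n ≤ bound (n + 5)
  | 0 | 1 | 2 => by decide
  | n + 3 => by
    rw [bound_add_three, show n + 3 + 5 = n + 5 + 3 from rfl, bound_add_three]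
    linarith [le_bound_add_five n]

/-- A nonempty instance splits off a triangle, a square or a pentagon, or can be contracted. -/
theorem exists_reduction [DecidableEq V] [Nonempty V] (hA : IsHat3 A) :
    ∃ (U : Finset V) (B : Matrix U U ℤ), IsHat3 B ∧
      ((Fintype.card V = Fintype.card U + 3 ∧ A.permanent ≤ 6 * B.permanent) ∨
        (Fintype.card V = Fintype.card U + 4 ∧ A.permanent = 9 * B.permanent) ∨
        (Fintype.card V = Fintype.card U + 5 ∧ A.permanent = 13 * B.permanent)) := by
  obtain ⟨x₂⟩ := ‹Nonempty V›
  obtain ⟨x₁, n12, h21⟩ := hA.exists_neighbor x₂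
  obtain ⟨x₃, n32, n31, h23⟩ := hA.exists_eq_one n12
  have h12 := (hA.symm x₁ x₂).trans h21
  have h32 := (hA.symm x₃ x₂).trans h23
  rcases (hA.zero_or_one x₁ x₃).symm with h13 | h13
  · obtain ⟨U, B, hB, hc, hp⟩ := hA.exists_permanent_eq_mul isHat3_triangle ![x₁, x₂, x₃]
      (by
        intro i j
        fin_cases i <;> fin_cases j <;> simp [n12, n32, n31, n12.symm, n32.symm, n31.symm])
      (by
        intro i j
        fin_cases i <;> fin_cases j <;>
          simp [triangle, hA.diag, h12, h13, h23, hA.symm x₂ x₁, hA.symm x₃ x₁, hA.symm x₃ x₂])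
    rw [permanent_triangle] at hp
    exact ⟨U, B, hB, Or.inl ⟨by simpa [add_comm] using hc, hp.le⟩⟩
  obtain ⟨x₀, n01, n02, h10⟩ := hA.exists_eq_one n12.symm
  obtain ⟨x₄, n43, n42, h34⟩ := hA.exists_eq_one n32.symm
  have n03 : x₀ ≠ x₃ := by rintro rfl; simp [h13] at h10
  have n41 : x₄ ≠ x₁ := by rintro rfl; simp [hA.symm x₃, h13] at h34
  have h20 : A x₂ x₀ = 0 := hA.eq_zero_of_ne h21 h23 n12 n32 n31.symm n02 n01 n03
  have h24 : A x₂ x₄ = 0 := hA.eq_zero_of_ne h21 h23 n12 n32 n31.symm n42 n41 n43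
  by_cases n04 : x₀ = x₄
  · subst n04
    obtain ⟨U, B, hB, hc, hp⟩ := hA.exists_permanent_eq_mul isHat3_square ![x₀, x₁, x₂, x₃]
      (by
        intro i j
        fin_cases i <;> fin_cases j <;>
          simp [n12, n32, n31, n12.symm, n32.symm, n31.symm, n01, n02, n03, n01.symm, n02.symm,
            n03.symm])
      (by
        intro i j
        fin_cases i <;> fin_cases j <;>
          simp [square, hA.diag, h12, h13, h23, hA.symm x₂ x₁, hA.symm x₃ x₁, hA.symm x₃ x₂,
            hA.symm x₀, h10, h20, h34])
    rw [permanent_square] at hp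
    exact ⟨U, B, hB, Or.inr (Or.inl ⟨by simpa [add_comm] using hc, hp⟩)⟩
  rcases (hA.zero_or_one x₀ x₄).symm with h04 | h04
  · have h14 : A x₁ x₄ = 0 := hA.eq_zero_of_ne h12 h10 n12.symm n01 n02.symm n41 n42 (Ne.symm n04)
    have h30 : A x₃ x₀ = 0 := hA.eq_zero_of_ne h32 h34 n32.symm n43 n42.symm n03 n02 n04
    obtain ⟨U, B, hB, hc, hp⟩ := hA.exists_permanent_eq_mul isHat3_pentagon ![x₀, x₁, x₂, x₃, x₄]
      (by
        intro i j
        fin_cases i <;> fin_cases j <;>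
          simp [n12, n32, n31, n12.symm, n32.symm, n31.symm, n01, n02, n03, n01.symm, n02.symm,
            n03.symm, n04, Ne.symm n04, n41, n41.symm, n42, n42.symm, n43, n43.symm])
      (by
        intro i j
        fin_cases i <;> fin_cases j <;>
          simp [pentagon, hA.diag, h12, h13, h23, hA.symm x₂ x₁, hA.symm x₃ x₁, hA.symm x₃ x₂,
            hA.symm x₀ x₁, hA.symm x₀ x₂, hA.symm x₀ x₃, hA.symm x₄, h10, h20, h30, h04,
            h14, h24, h34])
    rw [permanent_pentagon] at hp
    exact ⟨U, B, hB, Or.inr (Or.inr ⟨by simpa [add_comm] using hc, hp⟩)⟩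
  · obtain ⟨U, B, hB, hc, hp⟩ := hA.exists_permanent_le_of_path h21 h23 h10 h34 h04 n12 n31.symm
      n32.symm n01 n02 n03 n41 n42 n43 n04
    exact ⟨U, B, hB, Or.inl ⟨hc, hp⟩⟩

theorem four_mul_permanent_le [DecidableEq V] (hA : IsHat3 A) :
    4 * A.permanent ≤ bound (Fintype.card V) := by
  induction hN : Fintype.card V using Nat.strong_induction_on generalizing V with
  | _ N ih =>
    subst hN
    rcases isEmpty_or_nonempty V with h | h
    · rw [permanent_isEmpty, Fintype.card_eq_zero]
      decide
    obtain ⟨U, B, hB, ⟨hc, hp⟩ | ⟨hc, hp⟩ | ⟨hc, hp⟩⟩ := hA.exists_reduction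
    all_goals
      have hU := ih (Fintype.card U) (by omega) hB rfl
      rw [hc]
    · rw [bound_add_three]
      linarith
    · linarith [le_bound_add_four (Fintype.card U)]
    · linarith [le_bound_add_five (Fintype.card U)]

theorem exists_permanent_mul {m n : ℕ} {A : Matrix (Fin m) (Fin m) ℤ} {x : ℤ} (hA : IsHat3 A)
    (h : ∃ B ∈ LambdaHat3 n, B.permanent = x) :
    ∃ B ∈ LambdaHat3 (n + m), B.permanent = A.permanent * x := by
  obtain ⟨B, hB, rfl⟩ := h
  have e : Fin (n + m) ≃ Fin m ⊕ Fin n := (finSumFinEquiv.symm).trans (Equiv.sumComm _ _)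
  refine ⟨_, mem_lambdaHat3_iff.2
    ((hA.fromBlocks (mem_lambdaHat3_iff.1 hB)).submatrix_equiv e), ?_⟩
  rw [permanent_submatrix_equiv_self, permanent_fromBlocks_zero₂₁]

/-- Adding triangles to a given example. -/
theorem exists_permanent_mul_pow {n : ℕ} {x : ℤ} (h : ∃ B ∈ LambdaHat3 n, B.permanent = x) :
    ∀ k, ∃ B ∈ LambdaHat3 (n + 3 * k), B.permanent = x * 6 ^ k
  | 0 => by simpa using h
  | k + 1 => by
    have := exists_permanent_mul isHat3_triangle (exists_permanent_mul_pow h k)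
    rwa [permanent_triangle, show 6 * (x * 6 ^ k) = x * 6 ^ (k + 1) by ring] at this

theorem exists_permanent_eq_one : ∃ B ∈ LambdaHat3 0, B.permanent = 1 :=
  ⟨0, mem_lambdaHat3_iff.2 ⟨nofun, nofun, nofun, nofun⟩, permanent_isEmpty⟩

theorem exists_permanent_eq_nine : ∃ B ∈ LambdaHat3 4, B.permanent = 9 :=
  ⟨square, mem_lambdaHat3_iff.2 isHat3_square, permanent_square⟩

theorem exists_permanent_eq_eighty_one : ∃ B ∈ LambdaHat3 8, B.permanent = 81 := by
  simpa [permanent_square] using exists_permanent_mul isHat3_square exists_permanent_eq_nine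

/-- An example attaining `bound` has maximal permanent. -/
theorem isGreatest {n : ℕ} {x : ℤ} (h : ∃ B ∈ LambdaHat3 n, B.permanent = x)
    (hx : bound n = 4 * x) : IsGreatest {x : ℤ | ∃ A ∈ LambdaHat3 n, A.permanent = x} x := by
  refine ⟨h, ?_⟩
  rintro _ ⟨A, hA, rfl⟩
  have := (mem_lambdaHat3_iff.1 hA).four_mul_permanent_le
  rw [Fintype.card_fin, hx] at this
  linarith

theorem bound_add_three_mul (n : ℕ) : ∀ k, bound (n + 3 * k) = bound n * 6 ^ k
  | 0 => by simp
  | k + 1 => by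
    rw [show n + 3 * (k + 1) = n + 3 * k + 3 by ring, bound_add_three, bound_add_three_mul n k]
    ring

theorem isGreatest_add_three_mul {n : ℕ} {x : ℤ} (h : ∃ B ∈ LambdaHat3 n, B.permanent = x)
    (hx : bound n = 4 * x) (k : ℕ) :
    IsGreatest {x : ℤ | ∃ A ∈ LambdaHat3 (n + 3 * k), A.permanent = x} (x * 6 ^ k) :=
  isGreatest (exists_permanent_mul_pow h k) (by rw [bound_add_three_mul, hx, mul_assoc])

end IsHat3

theorem stmt_14 (n : ℕ) (hn : 3 ≤ n) :
    (n % 3 = 0 →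
      IsGreatest {x : ℤ | ∃ A ∈ LambdaHat3 n, A.permanent = x} (6 ^ (n / 3))) ∧
    (n % 3 = 1 →
      IsGreatest {x : ℤ | ∃ A ∈ LambdaHat3 n, A.permanent = x} (9 * 6 ^ ((n - 4) / 3))) ∧
    (n % 3 = 2 → 8 ≤ n →
      IsGreatest {x : ℤ | ∃ A ∈ LambdaHat3 n, A.permanent = x} (81 * 6 ^ ((n - 8) / 3))) := by
  refine ⟨fun h => ?_, fun h => ?_, fun h h8 => ?_⟩
  · have := IsHat3.isGreatest_add_three_mul IsHat3.exists_permanent_eq_one (by decide) (n / 3)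
    rwa [show 0 + 3 * (n / 3) = n by omega, one_mul] at this
  · have := IsHat3.isGreatest_add_three_mul IsHat3.exists_permanent_eq_nine (by decide)
      ((n - 4) / 3)
    rwa [show 4 + 3 * ((n - 4) / 3) = n by omega] at this
  · have := IsHat3.isGreatest_add_three_mul IsHat3.exists_permanent_eq_eighty_one (by decide)
      ((n - 8) / 3)
    rwa [show 8 + 3 * ((n - 8) / 3) = n by omega] at this
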